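/- arXiv:2207.13445 — 8 statements merged into one kernel-verified Lean document; each statement's English description precedes it below -/
import Mathlib

section
/- The matrix A is self-adjoint with respect to the form ⟨·,·⟩ (i.e. ⟨Ax,y⟩ = ⟨x,Ay⟩ for all x,y ∈ k⁷, equivalently A = J·Aᵀ·J), and the characteristic polynomial of A over 𝔽₃ is squarefree; consequently A is regular semisimple, i.e. A has 7 distinct eigenvalues in an algebraic closure of 𝔽₃. -/
open Matrix

/-- The 7×7 anti-diagonal identity matrix (Gram matrix of the form
`⟨x,y⟩ = x₁y₇ + ... + x₇y₁`), 0-indexed: `Jmat i j = 1` iff `i + j = 6`. -/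
def Jmat : Matrix (Fin 7) (Fin 7) (ZMod 3) :=
  fun i j => if (i : ℕ) + (j : ℕ) = 6 then 1 else 0

/-- The symmetric bilinear form `⟨x,y⟩ = x₁y₇ + x₂y₆ + ... + x₇y₁` on `k⁷`. -/
def form (x y : Fin 7 → ZMod 3) : ZMod 3 := x ⬝ᵥ Jmat.mulVec y

/-- The matrix `A` from the paper. -/
def A : Matrix (Fin 7) (Fin 7) (ZMod 3) :=
  !![0,0,1,0,0,1,0;
     1,0,0,0,0,0,1;
     0,1,0,0,0,0,0;
     0,0,0,0,0,0,0;
     0,1,0,0,0,0,1;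
     0,0,1,0,1,0,0;
     0,0,0,0,0,1,0]

open Polynomial in
theorem three_zero : (3 : (ZMod 3)[X]) = 0 := by
  have : (C (3 : ZMod 3) : (ZMod 3)[X]) = 0 := by
    rw [show (3 : ZMod 3) = 0 from by decide]; simp
  exact this

open Polynomial in
set_option maxHeartbeats 4000000 in
theorem charpoly_A : A.charpoly = X ^ 7 + X ^ 4 + 2 * X ^ 3 + X := by
  have h3 := three_zero
  have h : A.charmatrix = !![X,0,-1,0,0,-1,0;
     -1,X,0,0,0,0,-1;
     0,-1,X,0,0,0,0;
     0,0,0,X,0,0,0;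
     0,-1,0,0,X,0,-1;
     0,0,-1,0,-1,X,0;
     0,0,0,0,0,-1,X] := by
    ext i j : 2
    fin_cases i <;> fin_cases j <;> simp [A]
  rw [Matrix.charpoly, h, Matrix.det_succ_row _ 3]
  simp [Fin.sum_univ_succ, Fin.succAbove, Matrix.det_succ_row_zero, Matrix.submatrix]
  linear_combination (-2 * X ^ 3 - X ^ 4) * h3

open Polynomial in
theorem sep_A : A.charpoly.Separable := by
  have h3 := three_zero
  rw [charpoly_A]
  refine ⟨1 + X ^ 3, 1 + 2 * X + 2 * X ^ 4, ?_⟩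
  have c2 : (C (2 : ZMod 3)) = 2 := rfl
  have c3 : (C (3 : ZMod 3)) = 3 := rfl
  have c6 : (C (6 : ZMod 3)) = 6 := map_ofNat C 6
  simp
  simp only [c2, c3, c6]
  linear_combination (5 * X ^ 10 + 8 * X ^ 7 + 7 * X ^ 6 + 4 * X ^ 4 + 6 * X ^ 3 + 2 * X ^ 2 + X) * h3

/-- `A` is self-adjoint with respect to the form, equivalently `A = J·Aᵀ·J`,
its characteristic polynomial over `𝔽₃` is squarefree, and consequently `A`
has 7 distinct eigenvalues in an algebraic closure of `𝔽₃`. -/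
theorem stmt0 [DecidableEq (AlgebraicClosure (ZMod 3))] :
    (∀ x y : Fin 7 → ZMod 3, form (A.mulVec x) y = form x (A.mulVec y)) ∧
    A = Jmat * Aᵀ * Jmat ∧
    Squarefree (Matrix.charpoly A) ∧
    ((Matrix.charpoly A).map
        (algebraMap (ZMod 3) (AlgebraicClosure (ZMod 3)))).roots.toFinset.card = 7 := by
  have hA : A = Jmat * Aᵀ * Jmat := by decide
  have hJ : Aᵀ * Jmat = Jmat * A := by decide
  refine ⟨?_, hA, sep_A.squarefree, ?_⟩
  · intro x y
    unfold form
    rw [← Matrix.vecMul_transpose, ← Matrix.dotProduct_mulVec, Matrix.mulVec_mulVec,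
      Matrix.mulVec_mulVec, hJ]
  · rw [Multiset.toFinset_card_of_nodup (Polynomial.nodup_roots sep_A.map),
      ← (IsAlgClosed.splits _).natDegree_eq_card_roots, Polynomial.natDegree_map,
      Matrix.charpoly_natDegree_eq_dim]
    rfl
end

section
/- Let K be an algebraic closure of 𝔽₃ and let A_K ∈ M₇(K) be the image of A under the ring map 𝔽₃ → K applied entrywise. Let S = { g ∈ M₇(K) : gᵀ·J·g = J and g·A_K = A_K·g }. Then S is a subgroup of GL₇(K) under matrix multiplication, every g ∈ S satisfies g·g = 1, any two elements of S commute (S is abelian), and S has exactly 2⁷ = 128 elements. -/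
open Matrix

/-- An algebraic closure of `𝔽₃`. -/
abbrev K : Type := AlgebraicClosure (ZMod 3)

/-- The 7×7 anti-diagonal identity matrix over `K` (0-indexed: entry 1 iff `i + j = 6`). -/
noncomputable def JK : Matrix (Fin 7) (Fin 7) K :=
  fun i j => if (i : ℕ) + (j : ℕ) = 6 then 1 else 0

/-- The image `A_K` of `A` in `M₇(K)` under the entrywise ring map `𝔽₃ → K`. -/
noncomputable def AK : Matrix (Fin 7) (Fin 7) K := A.map (algebraMap (ZMod 3) K)

/-- `S = { g ∈ M₇(K) : gᵀ·J·g = J and g·A_K = A_K·g }`. -/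
def S : Set (Matrix (Fin 7) (Fin 7) K) :=
  {g | gᵀ * JK * g = JK ∧ g * AK = AK * g}

def Qm : Matrix (Fin 7) (Fin 7) (ZMod 3) :=
  !![0, 1, 2, 1, 2, 0, 1; 0, 0, 1, 1, 0, 0, 2; 0, 1, 1, 0, 0, 2, 0; 1, 0, 2, 1, 0, 0, 1;
     0, 2, 0, 0, 0, 1, 0; 0, 1, 0, 0, 0, 0, 0; 0, 0, 1, 2, 0, 0, 2]

def Cm : Matrix (Fin 7) (Fin 7) (ZMod 3) :=
  !![0, 0, 0, 1, 0, 0, 1; 0, 0, 0, 0, 0, 1, 0; 0, 0, 1, 0, 1, 0, 0; 0, 2, 0, 0, 0, 0, 1;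
     2, 0, 0, 0, 0, 1, 2; 0, 0, 0, 0, 1, 1, 0; 0, 1, 1, 0, 1, 0, 1]

def Mm : Matrix (Fin 7) (Fin 7) (ZMod 3) :=
  !![0, 1, 0, 0, 0, 0, 0; 0, 0, 1, 0, 0, 0, 0; 0, 0, 0, 1, 0, 0, 0; 0, 0, 0, 0, 1, 0, 0;
     0, 0, 0, 0, 0, 1, 0; 0, 0, 0, 0, 0, 0, 1; 0, 2, 0, 1, 2, 0, 0]

def Jm : Matrix (Fin 7) (Fin 7) (ZMod 3) :=
  fun i j => if (i : ℕ) + (j : ℕ) = 6 then 1 else 0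

set_option maxRecDepth 100000 in
lemma QC : Qm * Cm = 1 := by decide +kernel
set_option maxRecDepth 100000 in
lemma AQ : A * Qm = Qm * Mm := by decide +kernel
set_option maxRecDepth 100000 in
lemma JJ : Jm * Jm = 1 := by decide +kernel
set_option maxRecDepth 100000 in
lemma JA : Jm * A = Aᵀ * Jm := by decide +kernel

lemma three_zero_s1 : (3 : K) = 0 := by
  have h : (3 : ZMod 3) = 0 := by decide
  rw [← map_ofNat (algebraMap (ZMod 3) K) 3, h, map_zero]

lemma JK_eq : JK = Jm.map (algebraMap (ZMod 3) K) := by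
  ext i j
  simp only [JK, Jm, Matrix.map_apply]
  split_ifs <;> simp

open Polynomial in
lemma exists_roots : ∃ d : Fin 7 → K, Function.Injective d ∧
    ∀ i, d i ^ 7 + d i ^ 4 + 2 * d i ^ 3 + d i = 0 := by
  let f : K[X] := X ^ 7 + X ^ 4 + 2 * X ^ 3 + X
  have h3 : (3 : K[X]) = 0 := by
    rw [← map_ofNat (C : K →+* K[X]) 3, three_zero_s1, map_zero]
  have hd : f.natDegree = 7 := by
    simp only [f]
    compute_degree!
  have hder : derivative f = X ^ 6 + X ^ 3 + 1 := by
    simp [f, map_ofNat C]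
    linear_combination (2 * X ^ 6 + X ^ 3 + 2 * X ^ 2) * h3
  have hsep : f.Separable := by
    rw [Polynomial.separable_def, hder]
    refine ⟨1 + X ^ 3, 1 + 2 * X + 2 * X ^ 4, ?_⟩
    simp only [f]
    linear_combination (X ^ 10 + 2 * X ^ 7 + X ^ 6 + 2 * X ^ 4 + X ^ 3 + X) * h3
  have hc := Polynomial.card_rootSet_eq_natDegree (K := K) (F := K) hsep
    (IsAlgClosed.splits _)
  rw [hd] at hc
  let e := (Fintype.equivFinOfCardEq hc).symm
  refine ⟨fun i => (e i : K), fun a b h => e.injective (Subtype.ext h), fun i => ?_⟩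
  have := (Polynomial.mem_rootSet.1 (e i).2).2
  simpa [f] using this

lemma comm_diag (d : Fin 7 → K) (hd : Function.Injective d) (h : Matrix (Fin 7) (Fin 7) K)
    (hh : h * diagonal d = diagonal d * h) : h = diagonal (fun i => h i i) := by
  ext i j
  by_cases hij : i = j
  · subst hij; simp
  · have := congrFun (congrFun hh i) j
    rw [Matrix.mul_diagonal, Matrix.diagonal_mul] at this
    have h2 : (d j - d i) * h i j = 0 := by linear_combination this
    rw [Matrix.diagonal_apply_ne _ hij]
    exact (mul_eq_zero.1 h2).resolve_left (fun h => hij (hd (sub_eq_zero.1 h)).symm)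

lemma exists_P : ∃ (P R : Matrix (Fin 7) (Fin 7) K) (d : Fin 7 → K), Function.Injective d ∧
    P * R = 1 ∧ R * P = 1 ∧ AK * P = P * diagonal d := by
  obtain ⟨d, hd, hr⟩ := exists_roots
  let W : Matrix (Fin 7) (Fin 7) K := (vandermonde d)ᵀ
  have hW : IsUnit W.det := by
    rw [isUnit_iff_ne_zero, det_transpose]
    exact det_vandermonde_ne_zero_iff.2 hd
  let φ := algebraMap (ZMod 3) K
  have hMW : Mm.map φ * W = W * diagonal d := by
    ext i j
    rw [Matrix.mul_diagonal, Matrix.mul_apply]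
    have := hr j
    fin_cases i <;> simp [Fin.sum_univ_succ, Mm, W, vandermonde_apply, map_ofNat φ] <;> try ring
    linear_combination -this + (d j + d j ^ 3 + d j ^ 4) * three_zero_s1
  have hQC : Qm.map φ * Cm.map φ = 1 := by
    rw [← Matrix.map_mul, QC]; simp
  have hPR : (Qm.map φ * W) * (W⁻¹ * Cm.map φ) = 1 := by
    rw [Matrix.mul_assoc, Matrix.mul_nonsing_inv_cancel_left _ _ hW, hQC]
  refine ⟨Qm.map φ * W, W⁻¹ * Cm.map φ, d, hd, hPR, mul_eq_one_comm.1 hPR, ?_⟩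
  rw [AK, ← Matrix.mul_assoc, ← Matrix.map_mul, AQ, Matrix.map_mul, Matrix.mul_assoc, hMW,
    Matrix.mul_assoc]

lemma S_char : ∃ (P R : Matrix (Fin 7) (Fin 7) K), P * R = 1 ∧ R * P = 1 ∧
    ∀ g, g ∈ S ↔ ∃ e : Fin 7 → K, (∀ i, e i = 1 ∨ e i = -1) ∧ g = P * diagonal e * R := by
  obtain ⟨P, R, d, hd, hPR, hRP, hA⟩ := exists_P
  have hJA : JK * AK = AKᵀ * JK := by
    rw [JK_eq, AK, ← Matrix.map_mul, JA, Matrix.map_mul, Matrix.transpose_map]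
  have hJJ : JK * JK = 1 := by
    rw [JK_eq, ← Matrix.map_mul, JJ]; simp
  have hRA : R * AK = diagonal d * R := by
    calc R * AK = R * (AK * P) * R := by simp only [Matrix.mul_assoc, hPR, Matrix.mul_one]
      _ = (R * P) * diagonal d * R := by rw [hA]; simp only [Matrix.mul_assoc]
      _ = _ := by rw [hRP, Matrix.one_mul]
  -- the form in the eigenbasis is diagonal
  have hE : (Pᵀ * JK * P) * diagonal d = diagonal d * (Pᵀ * JK * P) := by
    have h1 : Pᵀ * AKᵀ = diagonal d * Pᵀ := by
      rw [← Matrix.transpose_mul, hA, Matrix.transpose_mul, diagonal_transpose]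
    calc (Pᵀ * JK * P) * diagonal d = Pᵀ * (JK * AK) * P := by
          simp only [Matrix.mul_assoc, hA]
      _ = (Pᵀ * AKᵀ) * JK * P := by rw [hJA]; simp only [Matrix.mul_assoc]
      _ = _ := by rw [h1]; simp only [Matrix.mul_assoc]
  have hE' := comm_diag d hd _ hE
  set ε : Fin 7 → K := fun i => (Pᵀ * JK * P) i i with hε
  have hPt : Pᵀ * Rᵀ = 1 := by rw [← Matrix.transpose_mul, hRP, Matrix.transpose_one]
  have hRPt : Rᵀ * Pᵀ = 1 := by rw [← Matrix.transpose_mul, hPR, Matrix.transpose_one]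
  have hEinv : diagonal ε * (R * JK * Rᵀ) = 1 := by
    rw [← hE']
    calc Pᵀ * JK * P * (R * JK * Rᵀ) = Pᵀ * JK * (P * R) * JK * Rᵀ := by
          simp only [Matrix.mul_assoc]
      _ = Pᵀ * (JK * JK) * Rᵀ := by rw [hPR]; simp only [Matrix.mul_assoc, Matrix.one_mul]
      _ = 1 := by rw [hJJ, Matrix.mul_one, hPt]
  have hε0 : ∀ i, ε i ≠ 0 := by
    intro i h0
    have := congrFun (congrFun hEinv i) i
    rw [Matrix.diagonal_mul, h0] at this
    simp at this
  have hJ : JK = Rᵀ * diagonal ε * R := by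
    rw [← hE']
    calc JK = (Rᵀ * Pᵀ) * JK * (P * R) := by rw [hRPt, hPR]; simp
      _ = _ := by simp only [Matrix.mul_assoc]
  refine ⟨P, R, hPR, hRP, fun g => ⟨?_, ?_⟩⟩
  · rintro ⟨h1, h2⟩
    have h3 : (R * g * P) * diagonal d = diagonal d * (R * g * P) := by
      calc (R * g * P) * diagonal d = R * (g * AK) * P := by simp only [Matrix.mul_assoc, hA]
        _ = (R * AK) * g * P := by rw [h2]; simp only [Matrix.mul_assoc]
        _ = _ := by rw [hRA]; simp only [Matrix.mul_assoc]
    have h4 := comm_diag d hd _ h3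
    set e : Fin 7 → K := fun i => (R * g * P) i i with he
    have hg : g = P * diagonal e * R := by
      rw [← h4]
      calc g = (P * R) * g * (P * R) := by rw [hPR]; simp
        _ = _ := by simp only [Matrix.mul_assoc]
    refine ⟨e, fun i => ?_, hg⟩
    have h5 : diagonal e * diagonal ε * diagonal e = diagonal ε := by
      have h6 : (R * g * P)ᵀ * (Pᵀ * JK * P) * (R * g * P) = Pᵀ * JK * P := by
        calc (R * g * P)ᵀ * (Pᵀ * JK * P) * (R * g * P)
            = Pᵀ * gᵀ * (Rᵀ * Pᵀ) * JK * (P * R) * g * P := by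
              simp only [Matrix.mul_assoc, Matrix.transpose_mul]
          _ = Pᵀ * (gᵀ * JK * g) * P := by
              rw [hRPt, hPR]; simp only [Matrix.mul_assoc, Matrix.one_mul]
          _ = _ := by rw [h1]
      rw [h4, hE', diagonal_transpose] at h6
      exact h6
    rw [diagonal_mul_diagonal, diagonal_mul_diagonal] at h5
    have h7 := congrFun (diagonal_injective h5) i
    have h8 : ε i * (e i * e i - 1) = 0 := by linear_combination h7
    have h9 := (mul_eq_zero.1 h8).resolve_left (hε0 i)
    exact mul_self_eq_one_iff.1 (sub_eq_zero.1 h9)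
  · rintro ⟨e, he, rfl⟩
    refine ⟨?_, ?_⟩
    · rw [hJ]
      calc (P * diagonal e * R)ᵀ * (Rᵀ * diagonal ε * R) * (P * diagonal e * R)
          = Rᵀ * diagonal e * (Pᵀ * Rᵀ) * diagonal ε * (R * P) * diagonal e * R := by
            simp only [Matrix.mul_assoc, Matrix.transpose_mul, diagonal_transpose]
        _ = Rᵀ * (diagonal e * diagonal ε * diagonal e) * R := by
            rw [hPt, hRP]; simp only [Matrix.mul_assoc, Matrix.one_mul]
        _ = _ := by
            rw [diagonal_mul_diagonal, diagonal_mul_diagonal]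
            congr 3
            funext i
            rcases he i with h | h <;> rw [h] <;> ring
    · calc P * diagonal e * R * AK = P * (diagonal e * diagonal d) * R := by
            simp only [Matrix.mul_assoc, hRA]
        _ = P * (diagonal d * diagonal e) * R := by
            rw [diagonal_mul_diagonal, diagonal_mul_diagonal]
            simp only [mul_comm]
        _ = (P * diagonal d) * diagonal e * R := by simp only [Matrix.mul_assoc]
        _ = _ := by rw [← hA]; simp only [Matrix.mul_assoc]

/-- The stabilizer of `A` in `O₇` over the algebraic closure: every element of `S` is
invertible, `S` contains `1`, is closed under multiplication, every element squares to `1`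
(so `S` is a 2-torsion subgroup of `GL₇(K)`), any two elements commute, and `S` has
exactly `2⁷ = 128` elements. -/
theorem stmt1 :
    (∀ g ∈ S, IsUnit g) ∧
    (1 : Matrix (Fin 7) (Fin 7) K) ∈ S ∧
    (∀ g ∈ S, ∀ h ∈ S, g * h ∈ S) ∧
    (∀ g ∈ S, g * g = 1) ∧
    (∀ g ∈ S, ∀ h ∈ S, g * h = h * g) ∧
    Nat.card S = 128 := by
  obtain ⟨P, R, hPR, hRP, hS⟩ := S_char
  have hmul : ∀ a b : Fin 7 → K, (P * diagonal a * R) * (P * diagonal b * R)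
      = P * diagonal (fun i => a i * b i) * R := by
    intro a b
    calc (P * diagonal a * R) * (P * diagonal b * R)
        = P * diagonal a * (R * P) * diagonal b * R := by simp only [Matrix.mul_assoc]
      _ = P * (diagonal a * diagonal b) * R := by
          rw [hRP]; simp only [Matrix.mul_assoc, Matrix.one_mul]
      _ = _ := by rw [diagonal_mul_diagonal]
  have hone : P * diagonal (fun _ => (1 : K)) * R = 1 := by
    rw [diagonal_one, Matrix.mul_one, hPR]
  have hsq : ∀ g ∈ S, g * g = 1 := by
    intro g hg
    obtain ⟨e, he, rfl⟩ := (hS g).1 hg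
    rw [hmul, ← hone]
    congr 3
    funext i
    rcases he i with h | h <;> rw [h] <;> ring
  refine ⟨fun g hg => IsUnit.of_mul_eq_one _ (hsq g hg), ?_, ?_, hsq, ?_, ?_⟩
  · exact (hS 1).2 ⟨fun _ => 1, fun _ => Or.inl rfl, hone.symm⟩
  · intro g hg h hh
    obtain ⟨a, ha, rfl⟩ := (hS g).1 hg
    obtain ⟨b, hb, rfl⟩ := (hS h).1 hh
    refine (hS _).2 ⟨fun i => a i * b i, fun i => ?_, hmul a b⟩
    rcases ha i with h | h <;> rcases hb i with h' | h' <;> simp [h, h']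
  · intro g hg h hh
    obtain ⟨a, ha, rfl⟩ := (hS g).1 hg
    obtain ⟨b, hb, rfl⟩ := (hS h).1 hh
    rw [hmul, hmul]
    simp only [mul_comm]
  · have hneg : (1 : K) ≠ -1 := by
      intro h
      exact one_ne_zero (α := K) (by linear_combination three_zero_s1 - h)
    let s : Bool → K := fun b => if b then 1 else -1
    have hs : Function.Injective s := by
      intro a b
      cases a <;> cases b <;> simp [s, hneg, hneg.symm]
    let F : (Fin 7 → Bool) → S := fun b => ⟨P * diagonal (fun i => s (b i)) * R,
      (hS _).2 ⟨_, fun i => by cases b i <;> simp [s], rfl⟩⟩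
    have hF : Function.Bijective F := by
      constructor
      · intro a b hab
        have h1 : P * diagonal (fun i => s (a i)) * R = P * diagonal (fun i => s (b i)) * R :=
          congrArg Subtype.val hab
        have h2 : ∀ e : Fin 7 → K, R * (P * diagonal e * R) * P = diagonal e := by
          intro e
          calc R * (P * diagonal e * R) * P = (R * P) * diagonal e * (R * P) := by
                simp only [Matrix.mul_assoc]
            _ = _ := by rw [hRP]; simp
        have h3 := (h2 _).symm.trans ((congrArg (fun x => R * x * P) h1).trans (h2 _))
        funext i
        exact hs (congrFun (diagonal_injective h3) i)
      · rintro ⟨g, hg⟩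
        obtain ⟨e, he, rfl⟩ := (hS g).1 hg
        classical
        refine ⟨fun i => decide (e i = 1), Subtype.ext ?_⟩
        simp only [F]
        congr 3
        funext i
        rcases he i with h | h
        · simp [s, h]
        · simp [s, h, hneg.symm]
    rw [← Nat.card_congr (Equiv.ofBijective F hF)]
    simp
end

section
/- Let M be a self-adjoint endomorphism of V whose characteristic polynomial has n distinct roots in K (so M has n distinct eigenvalues in K, with all eigenspaces one-dimensional and eigenvectors spanning V), and let g be an orthogonal endomorphism of V. Then g commutes with M (g ∘ M = M ∘ g) if and only if for every eigenvector v of M one has g v = v or g v = −v. -/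
/-- Let `V` be a finite-dimensional vector space over a field `K` with a nondegenerate
symmetric bilinear form `B`. Let `M` be a self-adjoint endomorphism whose characteristic
polynomial has `n = dim V` distinct roots in `K`, and let `g` be an orthogonal
endomorphism. Then `g` commutes with `M` if and only if `g` acts as `+1` or `-1` on
every eigenvector of `M`. -/
theorem stmt2 {K V : Type*} [Field K] [DecidableEq K] [AddCommGroup V] [Module K V]
    [FiniteDimensional K V]
    (B : LinearMap.BilinForm K V)
    (hBnondeg : B.Nondegenerate)
    (hBsymm : ∀ x y : V, B x y = B y x)
    (M : V →ₗ[K] V)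
    (hMsa : ∀ x y : V, B (M x) y = B x (M y))
    (hMrss : (LinearMap.charpoly M).roots.toFinset.card = Module.finrank K V)
    (g : V →ₗ[K] V)
    (hgorth : ∀ x y : V, B (g x) (g y) = B x y) :
    g ∘ₗ M = M ∘ₗ g ↔
      ∀ v : V, v ≠ 0 → (∃ μ : K, M v = μ • v) → (g v = v ∨ g v = -v) := by
  have ex : ∀ s : (LinearMap.charpoly M).roots.toFinset, ∃ u : V, u ≠ 0 ∧ M u = (s : K) • u := by
    intro s
    have hs : (s : K) ∈ (LinearMap.charpoly M).roots := Multiset.mem_toFinset.1 s.2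
    have h2 := (Polynomial.mem_roots'.1 hs).2
    have h3 : Module.End.HasEigenvalue M (s : K) :=
      (Module.End.hasEigenvalue_iff_isRoot_charpoly M (s : K)).2 h2
    obtain ⟨u, hu⟩ := h3.exists_hasEigenvector
    exact ⟨u, hu.2, hu.apply_eq_smul⟩
  choose e he0 heM using ex
  have span_of : ∀ f : (LinearMap.charpoly M).roots.toFinset → V,
      (∀ s, f s ≠ 0) → (∀ s, M (f s) = (s : K) • f s) →
      Submodule.span K (Set.range f) = ⊤ := by
    intro f h0 h1
    have hli : LinearIndependent K f :=
      Module.End.eigenvectors_linearIndependent' M Subtype.val Subtype.val_injective f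
        (fun s => ⟨Module.End.mem_eigenspace_iff.2 (h1 s), h0 s⟩)
    exact hli.span_eq_top_of_card_eq_finrank' (by simpa using hMrss)
  have orth : ∀ (a b : K) (x y : V), M x = a • x → M y = b • y → a ≠ b → B x y = 0 := by
    intro a b x y hx hy hab
    have h := hMsa x y
    rw [hx, hy] at h
    simp only [map_smul, LinearMap.smul_apply, smul_eq_mul] at h
    have : (a - b) * B x y = 0 := by linear_combination h
    exact (mul_eq_zero.1 this).resolve_left (sub_ne_zero.2 hab)
  have key : ∀ (μ : K) (v x : V), v ≠ 0 → M v = μ • v → M x = μ • x → B x v = 0 → x = 0 := by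
    intro μ v x hv hMv hMx hxv
    have hsp := span_of (fun s : (LinearMap.charpoly M).roots.toFinset => if (s : K) = μ then v else e s)
      (by intro s; split_ifs; exacts [hv, he0 s])
      (by intro s; split_ifs with h; exacts [h ▸ hMv, heM s])
    have hz : ∀ y, B x y = 0 := by
      intro y
      have hy : y ∈ Submodule.span K (Set.range
          (fun s : (LinearMap.charpoly M).roots.toFinset => if (s : K) = μ then v else e s)) := by
        rw [hsp]; trivial
      have hle : Submodule.span K (Set.range
          (fun s : (LinearMap.charpoly M).roots.toFinset => if (s : K) = μ then v else e s))
          ≤ LinearMap.ker (B x) := by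
        rw [Submodule.span_le]
        rintro _ ⟨s, rfl⟩
        simp only [SetLike.mem_coe, LinearMap.mem_ker]
        split_ifs with h
        · exact hxv
        · exact orth μ s x (e s) hMx (heM s) (fun h' => h h'.symm)
      exact hle hy
    exact hBnondeg.1 x hz
  constructor
  · rintro hc v hv ⟨μ, hM⟩
    have hMg : M (g v) = μ • g v := by
      have := LinearMap.congr_fun hc v
      simp only [LinearMap.comp_apply] at this
      rw [← this, hM, map_smul]
    have hvv : B v v ≠ 0 := fun h => hv (key μ v v hv hM hM h)
    obtain ⟨c, hcv⟩ : ∃ c : K, g v = c • v := by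
      refine ⟨B (g v) v / B v v, sub_eq_zero.1 (key μ v _ hv hM ?_ ?_)⟩
      · rw [map_sub, map_smul, hMg, hM, smul_sub, smul_comm]
      · simp [hvv]
    have h := hgorth v v
    rw [hcv] at h
    simp only [map_smul, LinearMap.smul_apply, smul_eq_mul] at h
    have h2 : (c - 1) * (c + 1) = 0 := by
      apply mul_right_cancel₀ hvv
      linear_combination h
    rcases mul_eq_zero.1 h2 with h3 | h3
    · left; rw [hcv, sub_eq_zero.1 h3, one_smul]
    · right; rw [hcv, eq_neg_of_add_eq_zero_left h3, neg_smul, one_smul]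
  · intro h
    apply LinearMap.ext_on (span_of e he0 heM)
    rintro _ ⟨s, rfl⟩
    simp only [LinearMap.comp_apply]
    rcases h (e s) (he0 s) ⟨s, heM s⟩ with h1 | h1
    · rw [heM, map_smul, h1, heM]
    · rw [heM, map_smul, h1, map_neg, heM, smul_neg]
end

section
/- For every g ∈ O₇(k), the conjugate g⁻¹·A·g does NOT vanish at all positions of P; that is, there exists a position (i,j) ∈ P with (g⁻¹·A·g)ᵢⱼ ≠ 0. -/
open Matrix

/-- The set of matrix positions of Lemma 2.2 (0-indexed; in the paper's 1-indexed
convention these are (3,1),(4,1),(5,1),(5,2),(6,1),(6,2),(6,3),(7,1),(7,2),(7,3),(7,4),(7,5)). -/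
def P : Set (Fin 7 × Fin 7) :=
  {(2,0),(3,0),(4,0),(4,1),(5,0),(5,1),(5,2),(6,0),(6,1),(6,2),(6,3),(6,4)}

/-- The bilinear form, in coordinates. -/
def bf (x y : Fin 7 → ZMod 3) : ZMod 3 :=
  x 0 * y 6 + x 1 * y 5 + x 2 * y 4 + x 3 * y 3 + x 4 * y 2 + x 5 * y 1 + x 6 * y 0

/-- The action of `A`, in coordinates. -/
def av (x : Fin 7 → ZMod 3) : Fin 7 → ZMod 3 :=
  ![x 2 + x 5, x 0 + x 6, x 1, 0, x 1 + x 6, x 2 + x 4, x 5]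

lemma vec_eta (x : Fin 7 → ZMod 3) : x = ![x 0, x 1, x 2, x 3, x 4, x 5, x 6] := by
  ext i; fin_cases i <;> rfl

/-- The four candidate vectors up to sign. -/
def cand : List (Fin 7 → ZMod 3) :=
  [![0,0,0,0,1,0,0], ![0,1,2,0,1,1,2], ![1,0,0,0,0,0,0], ![1,1,2,0,0,1,2],
   ![0,0,0,0,2,0,0], ![0,2,1,0,2,2,1], ![2,0,0,0,0,0,0], ![2,2,1,0,0,2,1]]

set_option maxRecDepth 100000 in
lemma enum_cand : ∀ a b c d e f g : ZMod 3,
    bf ![a,b,c,d,e,f,g] ![a,b,c,d,e,f,g] = 0 →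
    bf ![a,b,c,d,e,f,g] (av ![a,b,c,d,e,f,g]) = 0 →
    bf (av ![a,b,c,d,e,f,g]) (av ![a,b,c,d,e,f,g]) = 0 →
    bf (av ![a,b,c,d,e,f,g]) (av (av ![a,b,c,d,e,f,g])) = 0 →
    ![a,b,c,d,e,f,g] = 0 ∨ ![a,b,c,d,e,f,g] ∈ cand := by
  decide +kernel

/-- `u` lies in the span of `v` and `av v`. -/
def inSpan (v u : Fin 7 → ZMod 3) : Prop := ∃ p q : ZMod 3, u = p • v + q • av v

instance (v u : Fin 7 → ZMod 3) : Decidable (inSpan v u) := by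
  unfold inSpan; infer_instance

set_option maxRecDepth 100000 in
lemma enum_third : ∀ i : Fin 8, ∀ a b c d e f g : ZMod 3,
    bf ![a,b,c,d,e,f,g] (cand.get i) = 0 →
    bf ![a,b,c,d,e,f,g] (av (cand.get i)) = 0 →
    bf ![a,b,c,d,e,f,g] (av (av (cand.get i))) = 0 →
    bf ![a,b,c,d,e,f,g] ![a,b,c,d,e,f,g] = 0 →
    inSpan (cand.get i) ![a,b,c,d,e,f,g] := by
  decide +kernel

set_option maxRecDepth 10000 in
lemma bf_col (g : Matrix (Fin 7) (Fin 7) (ZMod 3)) (hg : gᵀ * Jmat * g = Jmat) (i j : Fin 7) :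
    bf (fun k => g k i) (fun k => g k j) = if (i : ℕ) + (j : ℕ) = 6 then 1 else 0 := by
  have h := congrFun (congrFun hg i) j
  have h2 : Jmat i j = if (i : ℕ) + (j : ℕ) = 6 then 1 else 0 := rfl
  rw [← h2, ← h]
  simp [Matrix.mul_apply, Fin.sum_univ_seven, Jmat, bf]
  ring

lemma bf_add_left (x y z : Fin 7 → ZMod 3) : bf (x + y) z = bf x z + bf y z := by
  simp [bf]; ring
lemma bf_add_right (x y z : Fin 7 → ZMod 3) : bf z (x + y) = bf z x + bf z y := by
  simp [bf]; ring
lemma bf_smul_left (p : ZMod 3) (x z : Fin 7 → ZMod 3) : bf (p • x) z = p * bf x z := by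
  simp [bf]; ring
lemma bf_smul_right (p : ZMod 3) (x z : Fin 7 → ZMod 3) : bf z (p • x) = p * bf z x := by
  simp [bf]; ring
lemma av_add (x y : Fin 7 → ZMod 3) : av (x + y) = av x + av y := by
  ext i; fin_cases i <;> simp [av] <;> ring
lemma av_smul (p : ZMod 3) (x : Fin 7 → ZMod 3) : av (p • x) = p • av x := by
  ext i; fin_cases i <;> simp [av] <;> ring

lemma av_eq (x : Fin 7 → ZMod 3) : av x = A *ᵥ x := by
  ext i; fin_cases i <;> simp [av, A, Matrix.mulVec, dotProduct, Fin.sum_univ_succ]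

/-- Lemma 2.2: for every `g ∈ O₇(𝔽₃)`, the conjugate `g⁻¹·A·g` does not vanish at all
positions of `P`. -/
theorem stmt3 (g : Matrix (Fin 7) (Fin 7) (ZMod 3)) (hg : gᵀ * Jmat * g = Jmat) :
    ∃ p ∈ P, (g⁻¹ * A * g) p.1 p.2 ≠ 0 := by
  by_contra! hP
  have hJ : Jmat * Jmat = 1 := by decide +kernel
  have hinv : (Jmat * gᵀ * Jmat) * g = 1 := by
    rw [Matrix.mul_assoc Jmat, Matrix.mul_assoc Jmat, hg, hJ]
  have hu : IsUnit g.det := (Matrix.isUnit_iff_isUnit_det g).1 (IsUnit.of_mul_eq_one_right _ hinv)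
  have hAg : A * g = g * (g⁻¹ * A * g) := by
    rw [Matrix.mul_assoc, Matrix.mul_nonsing_inv_cancel_left _ _ hu]
  generalize g⁻¹ * A * g = B at hP hAg
  have z20 : B 2 0 = 0 := hP (2,0) (by simp [P])
  have z30 : B 3 0 = 0 := hP (3,0) (by simp [P])
  have z40 : B 4 0 = 0 := hP (4,0) (by simp [P])
  have z50 : B 5 0 = 0 := hP (5,0) (by simp [P])
  have z60 : B 6 0 = 0 := hP (6,0) (by simp [P])
  have z41 : B 4 1 = 0 := hP (4,1) (by simp [P])
  have z51 : B 5 1 = 0 := hP (5,1) (by simp [P])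
  have z61 : B 6 1 = 0 := hP (6,1) (by simp [P])
  have hc := bf_col g hg
  have hcol (j : Fin 7) (k : Fin 7) : av (fun k => g k j) k = ∑ i, g k i * B i j := by
    rw [av_eq]; exact congrFun (congrFun hAg k) j
  have a0 : av (fun k => g k 0) = B 0 0 • (fun k => g k 0) + B 1 0 • (fun k => g k 1) := by
    ext k
    rw [hcol, Fin.sum_univ_seven, z20, z30, z40, z50, z60]
    simp [mul_comm]
  have a1 : av (fun k => g k 1) = B 0 1 • (fun k => g k 0) + B 1 1 • (fun k => g k 1)
      + B 2 1 • (fun k => g k 2) + B 3 1 • (fun k => g k 3) := by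
    ext k
    rw [hcol, Fin.sum_univ_seven, z41, z51, z61]
    simp [mul_comm]
  have c00 := hc 0 0
  have c01 := hc 0 1
  have c02 := hc 0 2
  have c03 := hc 0 3
  have c10 := hc 1 0
  have c11 := hc 1 1
  have c12 := hc 1 2
  have c13 := hc 1 3
  have c20 := hc 2 0
  have c21 := hc 2 1
  have c22 := hc 2 2
  have c23 := hc 2 3
  have c40 := hc 4 0
  have c41 := hc 4 1
  have c42 := hc 4 2
  have c60 := hc 6 0
  generalize (fun k => g k 0) = v at *
  generalize (fun k => g k 1) = w at *
  generalize (fun k => g k 2) = u at *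
  generalize (fun k => g k 3) = t at *
  generalize (fun k => g k 4) = s at *
  generalize (fun k => g k 6) = r at *
  simp at c00 c01 c02 c03 c10 c11 c12 c13 c20 c21 c22 c23 c40 c41 c42 c60
  have hv0 : v ≠ 0 := by
    rintro rfl
    simp [bf] at c60
  have e1 : bf v (av v) = 0 := by simp [a0, bf_add_right, bf_smul_right, *]
  have e2 : bf (av v) (av v) = 0 := by
    simp [a0, bf_add_right, bf_smul_right, bf_add_left, bf_smul_left, *]
  have e3 : bf (av v) (av (av v)) = 0 := by
    simp [a0, a1, av_add, av_smul, bf_add_right, bf_smul_right, bf_add_left, bf_smul_left, *]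
  have f1 : bf u (av v) = 0 := by simp [a0, bf_add_right, bf_smul_right, *]
  have f2 : bf u (av (av v)) = 0 := by
    simp [a0, a1, av_add, av_smul, bf_add_right, bf_smul_right, *]
  have hcand : v ∈ cand := by
    have h := enum_cand (v 0) (v 1) (v 2) (v 3) (v 4) (v 5) (v 6)
    rw [← vec_eta v] at h
    rcases h c00 e1 e2 e3 with h | h
    · exact absurd h hv0
    · exact h
  obtain ⟨i, hi⟩ := List.get_of_mem hcand
  have h := enum_third i (u 0) (u 1) (u 2) (u 3) (u 4) (u 5) (u 6)
  rw [← vec_eta u, hi] at h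
  obtain ⟨p, q, hpq⟩ := h c20 f1 f2 c22
  have : bf s u = 0 := by
    rw [hpq, a0]
    simp [bf_add_right, bf_smul_right, *]
  rw [c42] at this
  exact absurd this (by decide)
end

section
/- Let M ∈ M₇(k) be self-adjoint with respect to the form ⟨·,·⟩ (i.e. M = J·Mᵀ·J). Suppose there exists m with 1 ≤ m ≤ 3 such that Mᵢⱼ = 0 whenever j ≤ m < i (the lower-left (7−m)×m block of M vanishes, making M properly blockwise triangular). Then the characteristic polynomial of M over k is not squarefree; in particular M is not regular semisimple. -/
open Matrix

theorem stmt6_entry (M : Matrix (Fin 7) (Fin 7) (ZMod 3))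
    (hsa : M = Jmat * Mᵀ * Jmat) (i j : Fin 7) : M i j = M j.rev i.rev := by
  have h := congrFun (congrFun hsa i) j
  rw [h]
  have hJ : ∀ a b : Fin 7, Jmat a b = if b = a.rev then 1 else 0 := by
    intro a b; unfold Jmat; congr 1; simp only [Fin.ext_iff, Fin.val_rev, eq_iff_iff]; omega
  have hJ' : ∀ a b : Fin 7, Jmat a b = if a = b.rev then 1 else 0 := by
    intro a b; unfold Jmat; congr 1; simp only [Fin.ext_iff, Fin.val_rev, eq_iff_iff]; omega
  rw [Matrix.mul_apply]
  simp_rw [hJ' _ j]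
  simp [Matrix.mul_apply, hJ i]

theorem stmt6 (M : Matrix (Fin 7) (Fin 7) (ZMod 3))
    (hsa : M = Jmat * Mᵀ * Jmat)
    (m : ℕ) (hm1 : 1 ≤ m) (hm3 : m ≤ 3)
    (hblock : ∀ i j : Fin 7, (j : ℕ) + 1 ≤ m → m < (i : ℕ) + 1 → M i j = 0) :
    ¬ Squarefree (Matrix.charpoly M) := by
  have hent := stmt6_entry M hsa
  let b : Fin 7 → Fin 3 := fun i => if (i : ℕ) < m then 0 else if (i : ℕ) < 7 - m then 1 else 2
  have hb0 : ∀ i, b i = 0 ↔ (i : ℕ) < m := by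
    intro i; simp only [b]; split_ifs with h1 h2 <;> simp [h1]
  have hb2 : ∀ i, b i = 2 ↔ 7 - m ≤ (i : ℕ) := by
    intro i; simp only [b]; split_ifs <;> simp <;> omega
  have hT : M.BlockTriangular b := by
    intro i j hij
    by_cases hj : (j : ℕ) < m
    · apply hblock i j hj
      by_contra hi
      have := (hb0 i).2 (by omega)
      rw [this] at hij
      exact absurd hij (by simp)
    · have h1 : b j ≠ 0 := fun h => hj ((hb0 j).1 h)
      have h2 : b i = 2 := by
        generalize b i = x at *
        generalize b j = y at *
        revert x y; decide
      have h3 := (hb2 i).1 h2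
      have h4 : ¬ (7 - m ≤ (j : ℕ)) := fun h => by
        rw [(hb2 j).2 h, h2] at hij; exact absurd hij (by simp)
      rw [hent i j]
      apply hblock <;> simp only [Fin.val_rev] <;> omega
  have hdet : M.charpoly = ∏ k, (M.toSquareBlock b k).charpoly := by
    rw [Matrix.charpoly, hT.charmatrix.det_fintype]
    refine Finset.prod_congr rfl fun k _ => ?_
    rw [← Matrix.charmatrix_toSquareBlock, Matrix.charpoly]
  let e : {i // b i = 0} ≃ {i // b i = 2} := Fin.revPerm.subtypeEquiv (by
    intro i
    rw [hb0, hb2, Fin.revPerm_apply, Fin.val_rev]; omega)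
  have heq : (M.toSquareBlock b 2).charpoly = (M.toSquareBlock b 0).charpoly := by
    have hM : M.toSquareBlock b 2 = (Matrix.reindex e e (M.toSquareBlock b 0))ᵀ := by
      ext i j
      exact hent i.1 j.1
    rw [hM, Matrix.charpoly_transpose, Matrix.charpoly_reindex]
  rw [Fin.prod_univ_three, heq] at hdet
  intro hsq
  have hu := hsq (M.toSquareBlock b 0).charpoly ⟨(M.toSquareBlock b 1).charpoly, by rw [hdet]; ring⟩
  have hd := Polynomial.natDegree_eq_zero_of_isUnit hu
  rw [Matrix.charpoly_natDegree_eq_dim, Fintype.card_eq_zero_iff] at hd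
  exact hd.elim ⟨0, (hb0 0).2 hm1⟩
end

section
/- For every g ∈ O₇(k), the conjugate g⁻¹·A·g does NOT vanish on the whole lower-left 3×3 block; that is, there exist i ∈ {5,6,7} and j ∈ {1,2,3} with (g⁻¹·A·g)ᵢⱼ ≠ 0. -/
open Matrix

def bq (M : Matrix (Fin 7) (Fin 7) (ZMod 3)) (x y : Fin 7 → ZMod 3) : ZMod 3 :=
  x ⬝ᵥ (M *ᵥ y)

lemma bq_add_left (M : Matrix (Fin 7) (Fin 7) (ZMod 3)) (x y z : Fin 7 → ZMod 3) :
    bq M (x + y) z = bq M x z + bq M y z := by simp [bq, add_dotProduct]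

lemma bq_add_right (M : Matrix (Fin 7) (Fin 7) (ZMod 3)) (x y z : Fin 7 → ZMod 3) :
    bq M x (y + z) = bq M x y + bq M x z := by simp [bq, mulVec_add]

lemma bq_smul_left (M : Matrix (Fin 7) (Fin 7) (ZMod 3)) (c : ZMod 3) (x z : Fin 7 → ZMod 3) :
    bq M (c • x) z = c * bq M x z := by simp [bq]

lemma bq_smul_right (M : Matrix (Fin 7) (Fin 7) (ZMod 3)) (c : ZMod 3) (x z : Fin 7 → ZMod 3) :
    bq M x (c • z) = c * bq M x z := by simp [bq, mulVec_smul]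

lemma bq_J (x y : Fin 7 → ZMod 3) : bq Jmat x y =
    x 0 * y 6 + x 1 * y 5 + x 2 * y 4 + x 3 * y 3 + x 4 * y 2 + x 5 * y 1 + x 6 * y 0 := by
  have h : Jmat = !![0,0,0,0,0,0,1;
     0,0,0,0,0,1,0;
     0,0,0,0,1,0,0;
     0,0,0,1,0,0,0;
     0,0,1,0,0,0,0;
     0,1,0,0,0,0,0;
     1,0,0,0,0,0,0] := by decide
  rw [h]
  simp [bq, dotProduct, mulVec, Fin.sum_univ_seven]

lemma bq_JA (x y : Fin 7 → ZMod 3) : bq (Jmat * A) x y =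
    x 0 * y 5 + x 1 * (y 2 + y 4) + x 2 * (y 1 + y 6) + x 4 * y 1 + x 5 * (y 0 + y 6)
      + x 6 * (y 2 + y 5) := by
  have h : Jmat * A = !![0,0,0,0,0,1,0;
     0,0,1,0,1,0,0;
     0,1,0,0,0,0,1;
     0,0,0,0,0,0,0;
     0,1,0,0,0,0,0;
     1,0,0,0,0,0,1;
     0,0,1,0,0,1,0] := by decide
  rw [h]
  simp [bq, dotProduct, mulVec, Fin.sum_univ_seven]

/-- The special point. -/
def pv : Fin 7 → ZMod 3 := ![1, 1, 0, 0, 2, 2, 1]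

set_option maxRecDepth 100000 in
set_option synthInstance.maxSize 2000 in
set_option synthInstance.maxHeartbeats 400000 in
lemma aux1 : ∀ a b c d e f g : ZMod 3, b + c + e = 0 → a + e + f + g = 0 →
    a * g + b * f + c * e + d * d + e * c + f * b + g * a = 0 →
    a * f + b * (c + e) + c * (b + g) + e * b + f * (a + g) + g * (c + f) = 0 →
    ∃ t : ZMod 3, a = t ∧ b = t ∧ c = 0 ∧ d = 0 ∧ e = t * 2 ∧ f = t * 2 ∧ g = t := by
  decide +kernel

set_option maxRecDepth 100000 in
set_option synthInstance.maxSize 2000 in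
set_option synthInstance.maxHeartbeats 400000 in
lemma aux2 : ∀ a b c d e f g : ZMod 3,
    g + f + 2 * c + 2 * b + a = 0 →
    f + (c + e) + 2 * b + 2 * (a + g) + (c + f) = 0 →
    a * g + b * f + c * e + d * d + e * c + f * b + g * a = 0 →
    a * f + b * (c + e) + c * (b + g) + e * b + f * (a + g) + g * (c + f) = 0 →
    ∃ t : ZMod 3, a = t ∧ b = t ∧ c = 0 ∧ d = 0 ∧ e = t * 2 ∧ f = t * 2 ∧ g = t := by
  decide +kernel

lemma ext7 (x : Fin 7 → ZMod 3) (h : ∃ t : ZMod 3, x 0 = t ∧ x 1 = t ∧ x 2 = 0 ∧ x 3 = 0 ∧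
    x 4 = t * 2 ∧ x 5 = t * 2 ∧ x 6 = t) : ∃ t : ZMod 3, x = t • pv := by
  obtain ⟨t, h0, h1, h2, h3, h4, h5, h6⟩ := h
  refine ⟨t, ?_⟩
  ext i
  fin_cases i <;> simp [pv, *]

lemma pt1 (x : Fin 7 → ZMod 3) (h1 : x 1 + x 2 + x 4 = 0) (h2 : x 0 + x 4 + x 5 + x 6 = 0)
    (h3 : bq Jmat x x = 0) (h4 : bq (Jmat * A) x x = 0) : ∃ t : ZMod 3, x = t • pv := by
  rw [bq_J] at h3
  rw [bq_JA] at h4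
  exact ext7 x (aux1 _ _ _ _ _ _ _ h1 h2 h3 h4)

lemma pt2 (x : Fin 7 → ZMod 3) (h1 : bq Jmat pv x = 0) (h2 : bq (Jmat * A) pv x = 0)
    (h3 : bq Jmat x x = 0) (h4 : bq (Jmat * A) x x = 0) : ∃ t : ZMod 3, x = t • pv := by
  rw [bq_J] at h1 h3
  rw [bq_JA] at h2 h4
  simp [pv] at h1 h2
  exact ext7 x (aux2 _ _ _ _ _ _ _ h1 h2 h3 h4)

lemma exc : ∀ a b c a' b' c' : ZMod 3, ∃ r s t : ZMod 3, (r ≠ 0 ∨ s ≠ 0 ∨ t ≠ 0) ∧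
    r * a + s * b + t * c = 0 ∧ r * a' + s * b' + t * c' = 0 := by
  decide +kernel

lemma core (x : Fin 7 → Fin 7 → ZMod 3) (hP : ∀ i j, bq Jmat (x i) (x j) = Jmat i j)
    (hQ : ∀ i j : Fin 7, i < 3 → j < 3 → bq (Jmat * A) (x i) (x j) = 0) : False := by
  obtain ⟨r, s, t, hne, e1, e2⟩ := exc (x 0 1 + x 0 2 + x 0 4) (x 1 1 + x 1 2 + x 1 4)
    (x 2 1 + x 2 2 + x 2 4) (x 0 0 + x 0 4 + x 0 5 + x 0 6) (x 1 0 + x 1 4 + x 1 5 + x 1 6)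
    (x 2 0 + x 2 4 + x 2 5 + x 2 6)
  set w : Fin 7 → ZMod 3 := r • x 0 + s • x 1 + t • x 2 with hw
  have hwP : ∀ j, bq Jmat w (x j) = r * Jmat 0 j + s * Jmat 1 j + t * Jmat 2 j := by
    intro j
    simp only [hw, bq_add_left, bq_smul_left, hP]
  have hPz : ∀ i j : Fin 7, i < 3 → j < 3 → Jmat i j = 0 := by
    intro i j hi hj
    have hi' : (i : ℕ) < 3 := hi
    have hj' : (j : ℕ) < 3 := hj
    exact if_neg (by omega)
  have hwQ : ∀ j : Fin 7, j < 3 → bq (Jmat * A) w (x j) = 0 := by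
    intro j hj
    simp only [hw, bq_add_left, bq_smul_left, hQ 0 j (by decide) hj, hQ 1 j (by decide) hj,
      hQ 2 j (by decide) hj]
    ring
  have hwP0 : ∀ j : Fin 7, j < 3 → bq Jmat w (x j) = 0 := by
    intro j hj
    rw [hwP, hPz 0 j (by decide) hj, hPz 1 j (by decide) hj, hPz 2 j (by decide) hj]
    ring
  have hself : ∀ M, (∀ j : Fin 7, j < 3 → bq M w (x j) = 0) → bq M w w = 0 := by
    intro M hM
    conv_lhs => arg 3; rw [hw]
    simp only [bq_add_right, bq_smul_right, hM 0 (by decide), hM 1 (by decide), hM 2 (by decide)]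
    ring
  obtain ⟨u, hu⟩ := pt1 w (by simp [hw]; linear_combination e1) (by simp [hw]; linear_combination e2)
    (hself _ hwP0) (hself _ hwQ)
  have hu0 : u ≠ 0 := by
    rintro rfl
    have z : ∀ j, bq Jmat w (x j) = 0 := by
      intro j; rw [hu, bq_smul_left, zero_mul]
    have z4 := z 4
    have z5 := z 5
    have z6 := z 6
    rw [hwP] at z4 z5 z6
    simp [Jmat] at z4 z5 z6
    simp_all
  have key : ∀ j : Fin 7, j < 3 → ∃ c : ZMod 3, x j = c • pv := by
    intro j hj
    have a1 := hwP0 j hj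
    have a2 := hwQ j hj
    rw [hu, bq_smul_left] at a1 a2
    exact pt2 (x j) ((mul_eq_zero.1 a1).resolve_left hu0) ((mul_eq_zero.1 a2).resolve_left hu0)
      (by rw [hP, hPz j j hj hj]) (hQ j j hj hj)
  obtain ⟨a, ha⟩ := key 0 (by decide)
  obtain ⟨b, hb⟩ := key 1 (by decide)
  have k1 := hP 0 6
  have k2 := hP 1 6
  have k3 := hP 1 5
  rw [ha, bq_smul_left] at k1
  rw [hb, bq_smul_left] at k2 k3
  simp [Jmat] at k1 k2 k3
  rcases k2 with h | h
  · simp [h] at k3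
  · simp [h] at k1

lemma conj_apply (g M : Matrix (Fin 7) (Fin 7) (ZMod 3)) (i j : Fin 7) :
    (gᵀ * M * g) i j = bq M (gᵀ i) (gᵀ j) := by
  rw [Matrix.mul_assoc]
  rfl

/-- Lemma 2.6: for every `g ∈ O₇(𝔽₃)`, the conjugate `g⁻¹·A·g` does not vanish on the
whole lower-left 3×3 block, i.e. there are `i ∈ {5,6,7}`, `j ∈ {1,2,3}` (1-indexed;
0-indexed `i ∈ {4,5,6}`, `j ∈ {0,1,2}`) with `(g⁻¹·A·g)ᵢⱼ ≠ 0`. -/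
theorem stmt7 (g : Matrix (Fin 7) (Fin 7) (ZMod 3)) (hg : gᵀ * Jmat * g = Jmat) :
    ∃ i ∈ ({4, 5, 6} : Set (Fin 7)), ∃ j ∈ ({0, 1, 2} : Set (Fin 7)),
      (g⁻¹ * A * g) i j ≠ 0 := by
  by_contra! hcon
  have hJJ : Jmat * Jmat = 1 := by decide
  have hinv : g⁻¹ = Jmat * (gᵀ * Jmat) := by
    apply Matrix.inv_eq_left_inv
    rw [Matrix.mul_assoc, hg, hJJ]
  have hconj : gᵀ * (Jmat * A) * g = Jmat * (g⁻¹ * A * g) := by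
    rw [hinv]
    simp only [← Matrix.mul_assoc, hJJ, Matrix.one_mul]
  refine core gᵀ (fun i j => ?_) (fun i j hi hj => ?_)
  · rw [← conj_apply, hg]
  · rw [← conj_apply, hconj]
    have hj' : j ∈ ({0, 1, 2} : Set (Fin 7)) := by
      revert hj; clear hconj hcon; revert j; simp; decide
    have h4 := hcon 4 (by simp) j hj'
    have h5 := hcon 5 (by simp) j hj'
    have h6 := hcon 6 (by simp) j hj'
    have hi' : i = 0 ∨ i = 1 ∨ i = 2 := by
      revert hi; clear hconj hcon; revert i; decide
    rcases hi' with rfl | rfl | rfl <;>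
      rw [Matrix.mul_apply, Fin.sum_univ_seven] <;> simp [Jmat, h4, h5, h6]
end

section
/- Let A' ∈ M₇(k) be any matrix and suppose g ∈ O₇(k) is such that g⁻¹·A'·g vanishes at every position of P. Let v := g·e₁, where e₁ ∈ k⁷ is the first standard basis vector. Then v ≠ 0, the inner products ⟨v,v⟩, ⟨v,A'v⟩, ⟨A'v,A'v⟩ and ⟨A'v,A'²v⟩ all vanish, and ⟨A'²v,A'²v⟩ = c² for some c ∈ k (i.e. ⟨A'²v,A'²v⟩ is a square in k). -/
open Matrix

theorem form_g (g : Matrix (Fin 7) (Fin 7) (ZMod 3)) (hg : gᵀ * Jmat * g = Jmat)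
    (x y : Fin 7 → ZMod 3) : form (g.mulVec x) (g.mulVec y) = form x y := by
  unfold form
  conv_rhs => rw [← hg]
  rw [← Matrix.mulVec_mulVec, ← Matrix.mulVec_mulVec, Matrix.dotProduct_mulVec x,
    Matrix.vecMul_transpose]

theorem form_expand (x y : Fin 7 → ZMod 3) : form x y =
    x 0 * y 6 + x 1 * y 5 + x 2 * y 4 + x 3 * y 3 + x 4 * y 2 + x 5 * y 1 + x 6 * y 0 := by
  simp [form, Jmat, dotProduct, Matrix.mulVec, Fin.sum_univ_succ, Fin.succ]
  ring

/-- The Lemma of Appendix A: if `A' ∈ M₇(𝔽₃)` and `g ∈ O₇(𝔽₃)` are such that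
`g⁻¹·A'·g` vanishes at every position of `P`, then `v := g·e₁` is nonzero,
`⟨v,v⟩ = ⟨v,A'v⟩ = ⟨A'v,A'v⟩ = ⟨A'v,A'²v⟩ = 0`, and `⟨A'²v,A'²v⟩` is a square in `𝔽₃`. -/
theorem stmt9 (A' : Matrix (Fin 7) (Fin 7) (ZMod 3))
    (g : Matrix (Fin 7) (Fin 7) (ZMod 3)) (hg : gᵀ * Jmat * g = Jmat)
    (hzero : ∀ p ∈ P, (g⁻¹ * A' * g) p.1 p.2 = 0) :
    let v := g.mulVec (Pi.single (0 : Fin 7) (1 : ZMod 3))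
    v ≠ 0 ∧
    form v v = 0 ∧
    form v (A'.mulVec v) = 0 ∧
    form (A'.mulVec v) (A'.mulVec v) = 0 ∧
    form (A'.mulVec v) (A'.mulVec (A'.mulVec v)) = 0 ∧
    ∃ c : ZMod 3, form (A'.mulVec (A'.mulVec v)) (A'.mulVec (A'.mulVec v)) = c ^ 2 := by
  intro v
  have hJ : Jmat * Jmat = 1 := by decide
  have hinv : (Jmat * gᵀ * Jmat) * g = 1 := by
    rw [← hJ]; conv_rhs => rw [← hg]
    simp only [Matrix.mul_assoc]
    simp only [← Matrix.mul_assoc, hJ]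
    simp only [Matrix.mul_assoc, hg]
  have hdet : IsUnit g.det := Matrix.isUnit_det_of_left_inverse hinv
  obtain ⟨B, hB⟩ : ∃ B, B = g⁻¹ * A' * g := ⟨_, rfl⟩
  rw [← hB] at hzero
  have hAg : A' * g = g * B := by
    rw [hB, Matrix.mul_assoc, Matrix.mul_nonsing_inv_cancel_left _ _ hdet]
  have hA : ∀ x, A'.mulVec (g.mulVec x) = g.mulVec (B.mulVec x) := by
    intro x
    rw [Matrix.mulVec_mulVec, Matrix.mulVec_mulVec, hAg]
  set e : Fin 7 → ZMod 3 := Pi.single 0 1 with he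
  have hv : v = g.mulVec e := rfl
  have z : ∀ i j, (i, j) ∈ P → B i j = 0 := fun i j h => hzero (i, j) h
  have z20 := z 2 0 (by simp [P])
  have z30 := z 3 0 (by simp [P])
  have z40 := z 4 0 (by simp [P])
  have z50 := z 5 0 (by simp [P])
  have z60 := z 6 0 (by simp [P])
  have z41 := z 4 1 (by simp [P])
  have z51 := z 5 1 (by simp [P])
  have z61 := z 6 1 (by simp [P])
  have hb : ∀ i, B.mulVec e i = B i 0 := by
    intro i; simp [he]
  have hbb : ∀ i, B.mulVec (B.mulVec e) i = B i 0 * B 0 0 + B i 1 * B 1 0 := by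
    intro i
    rw [Matrix.mulVec, dotProduct, Fin.sum_univ_seven]
    simp only [hb, z20, z30, z40, z50, z60]
    ring
  have e0 : e 0 = 1 := by simp [he]
  have e1 : ∀ i, i ≠ 0 → e i = 0 := by intro i hi; simp [he, hi]
  have a1 := e1 1 (by decide)
  have a2 := e1 2 (by decide)
  have a3 := e1 3 (by decide)
  have a4 := e1 4 (by decide)
  have a5 := e1 5 (by decide)
  have a6 := e1 6 (by decide)
  rw [hv]
  simp only [hA, form_g g hg]
  refine ⟨?_, ?_, ?_, ?_, ?_, B.mulVec (B.mulVec e) 3, ?_⟩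
  · intro h
    have h2 : (Jmat * gᵀ * Jmat).mulVec (g.mulVec e) = 0 := by rw [h, Matrix.mulVec_zero]
    rw [Matrix.mulVec_mulVec, hinv, Matrix.one_mulVec] at h2
    rw [h2] at e0
    exact absurd e0 (by decide)
  all_goals
    rw [form_expand]
    simp only [hb, hbb, z20, z30, z40, z50, z60, z41, z51, z61, a1, a2, a3, a4, a5, a6]
    ring
end

section
/- Let R be a commutative ring and M ∈ M₇(R) a strictly lower triangular matrix (Mᵢⱼ = 0 whenever i ≤ j) with M₂₁ = 0 and M₇₆ = 0. Then M⁵ = 0. If in addition M₄₃ = 0 and M₅₄ = 0, then M⁴ = 0. -/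
open Matrix

theorem level_pow {R : Type*} [CommRing R] (M : Matrix (Fin 7) (Fin 7) R) (f : Fin 7 → ℕ)
    (h : ∀ i j, f i ≤ f j → M i j = 0) (k : ℕ) : ∀ i j, f i < f j + k → (M ^ k) i j = 0 := by
  induction k with
  | zero =>
    intro i j hij
    rw [pow_zero, Matrix.one_apply_ne]
    rintro rfl
    omega
  | succ k ih =>
    intro i j hij
    rw [pow_succ, Matrix.mul_apply]
    refine Finset.sum_eq_zero fun l _ => ?_
    by_cases hl : f l ≤ f j
    · rw [h l j hl, mul_zero]
    · rw [ih i l (by omega), zero_mul]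

/-- Shape analysis from the proof of Proposition 3.1: if `M ∈ M₇(R)` is strictly lower
triangular (`Mᵢⱼ = 0` for `i ≤ j`) with vanishing `(2,1)` and `(7,6)` entries
(1-indexed; 0-indexed `(1,0)` and `(6,5)`), then `M⁵ = 0`; if moreover the `(4,3)` and
`(5,4)` entries (0-indexed `(3,2)` and `(4,3)`) vanish, then `M⁴ = 0`. -/
theorem stmt13 {R : Type*} [CommRing R] (M : Matrix (Fin 7) (Fin 7) R)
    (hlow : ∀ i j : Fin 7, i ≤ j → M i j = 0)
    (h21 : M 1 0 = 0) (h76 : M 6 5 = 0) :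
    M ^ 5 = 0 ∧ ((M 3 2 = 0 ∧ M 4 3 = 0) → M ^ 4 = 0) := by
  refine ⟨?_, fun ⟨h32, _⟩ => ?_⟩
  · ext i j
    refine level_pow M ![0, 0, 1, 2, 3, 4, 4] ?_ 5 i j ?_
    · intro i j hij
      by_cases hle : i ≤ j
      · exact hlow i j hle
      · have : (i = 1 ∧ j = 0) ∨ (i = 6 ∧ j = 5) := by
          revert i j; decide
        rcases this with ⟨rfl, rfl⟩ | ⟨rfl, rfl⟩ <;> assumption
    · revert i j; decide
  · ext i j
    refine level_pow M ![0, 0, 1, 1, 2, 3, 3] ?_ 4 i j ?_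
    · intro i j hij
      by_cases hle : i ≤ j
      · exact hlow i j hle
      · have : (i = 1 ∧ j = 0) ∨ (i = 6 ∧ j = 5) ∨ (i = 3 ∧ j = 2) := by
          revert i j; decide
        rcases this with ⟨rfl, rfl⟩ | ⟨rfl, rfl⟩ | ⟨rfl, rfl⟩ <;> assumption
    · revert i j; decide
end
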